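/- Fix integers n ≥ 1 and k with 1 ≤ k ≤ n, let x̃ ∈ ℝⁿ be k-sparse nonnegative, σ > 0 and C > 0. Then the map (g, h) ↦ ξ_up(σ, g, h, x̃, C) is Lipschitz on ℝᵐ × ℝⁿ with constant √(2·C² + σ²); that is, for all g⁽¹⁾, g⁽²⁾ ∈ ℝᵐ and h⁽¹⁾, h⁽²⁾ ∈ ℝⁿ: |ξ_up(σ, g⁽²⁾, h⁽²⁾, x̃, C) − ξ_up(σ, g⁽¹⁾, h⁽¹⁾, x̃, C)| ≤ √(2·C² + σ²)·√(‖g⁽²⁾ − g⁽¹⁾‖₂² + ‖h⁽²⁾ − h⁽¹⁾‖₂²). -/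

import Mathlib

noncomputable def e2norm {d : ℕ} (x : Fin d → ℝ) : ℝ := Real.sqrt (∑ i, x i ^ 2)

def kSparseNonneg (n k : ℕ) (x : Fin n → ℝ) : Prop :=
  (∀ i : Fin n, (i : ℕ) < n - k → x i = 0) ∧ ∀ i, 0 ≤ x i

noncomputable def tailSum {n : ℕ} (k : ℕ) (lam x : Fin n → ℝ) : ℝ :=
  ∑ i ∈ Finset.univ.filter (fun i : Fin n => n - k ≤ (i : ℕ)), lam i * x i

/-- ξ_up(σ, g, h, x̃, C), the optimal value of the dual maximization (2.61). -/
noncomputable def xiUpFun (m n k : ℕ) (σ C : ℝ) (xt : Fin n → ℝ)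
    (g : Fin m → ℝ) (h : Fin n → ℝ) : ℝ :=
  sSup {z : ℝ | ∃ ν : ℝ, ∃ lam : Fin n → ℝ, 0 ≤ ν ∧
    (∀ i, 0 ≤ lam i ∧ lam i ≤ 2 * ν) ∧
    z = Real.sqrt (C ^ 2 + σ ^ 2) * e2norm g
        - C * e2norm (fun i => h i + ν - lam i) - tailSum k lam xt}

theorem e2norm_eq {d : ℕ} (x : Fin d → ℝ) : e2norm x = ‖(WithLp.toLp 2 x : EuclideanSpace ℝ (Fin d))‖ := by
  simp [e2norm, EuclideanSpace.norm_eq]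

theorem e2norm_le_add {d : ℕ} (x y : Fin d → ℝ) : e2norm x ≤ e2norm y + e2norm (x - y) := by
  simp only [e2norm_eq, WithLp.toLp_sub]
  exact norm_le_norm_add_norm_sub' _ _

theorem e2norm_nonneg {d : ℕ} (x : Fin d → ℝ) : 0 ≤ e2norm x := Real.sqrt_nonneg _

theorem e2norm_comm {d : ℕ} (x y : Fin d → ℝ) : e2norm (x - y) = e2norm (y - x) := by
  simp only [e2norm_eq, WithLp.toLp_sub]
  exact norm_sub_rev _ _

theorem xi_le (m n k : ℕ)
    (xt : Fin n → ℝ) (hxt : kSparseNonneg n k xt)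
    (σ C : ℝ) (hC : 0 < C) (g1 g2 : Fin m → ℝ) (h1 h2 : Fin n → ℝ) :
    xiUpFun m n k σ C xt g2 h2 ≤ xiUpFun m n k σ C xt g1 h1 +
      (Real.sqrt (C ^ 2 + σ ^ 2) * e2norm (g2 - g1) + C * e2norm (h2 - h1)) := by
  apply csSup_le
  · exact ⟨_, 0, 0, le_rfl, by simp, rfl⟩
  · rintro z ⟨ν, lam, hν, hl, rfl⟩
    have key : Real.sqrt (C ^ 2 + σ ^ 2) * e2norm g1
        - C * e2norm (fun i => h1 i + ν - lam i) - tailSum k lam xt ≤ xiUpFun m n k σ C xt g1 h1 := by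
      apply le_csSup
      · refine ⟨Real.sqrt (C ^ 2 + σ ^ 2) * e2norm g1, ?_⟩
        rintro z ⟨ν', lam', hν', hl', rfl⟩
        have a := mul_nonneg hC.le (e2norm_nonneg (fun i => h1 i + ν' - lam' i))
        have b : 0 ≤ tailSum k lam' xt :=
          Finset.sum_nonneg fun i _ => mul_nonneg (hl' i).1 (hxt.2 i)
        linarith
      · exact ⟨ν, lam, hν, hl, rfl⟩
    have a := mul_le_mul_of_nonneg_left (e2norm_le_add g2 g1) (Real.sqrt_nonneg (C ^ 2 + σ ^ 2))
    have b := mul_le_mul_of_nonneg_left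
      (e2norm_le_add (fun i => h1 i + ν - lam i) (fun i => h2 i + ν - lam i)) hC.le
    have e : (fun i => h1 i + ν - lam i) - (fun i => h2 i + ν - lam i) = h1 - h2 := by
      ext i; simp
    rw [e, e2norm_comm h1 h2] at b
    linarith

theorem lasso_stmt6 (m n k : ℕ) (hn : 1 ≤ n) (hk1 : 1 ≤ k) (hkn : k ≤ n)
    (xt : Fin n → ℝ) (hxt : kSparseNonneg n k xt)
    (σ C : ℝ) (hσ : 0 < σ) (hC : 0 < C) :
    ∀ (g1 g2 : Fin m → ℝ) (h1 h2 : Fin n → ℝ),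
      |xiUpFun m n k σ C xt g2 h2 - xiUpFun m n k σ C xt g1 h1|
        ≤ Real.sqrt (2 * C ^ 2 + σ ^ 2) *
            Real.sqrt (e2norm (g2 - g1) ^ 2 + e2norm (h2 - h1) ^ 2) := by
  intro g1 g2 h1 h2
  have A := xi_le m n k xt hxt σ C hC g1 g2 h1 h2
  have B := xi_le m n k xt hxt σ C hC g2 g1 h2 h1
  rw [e2norm_comm g1 g2, e2norm_comm h1 h2] at B
  have K : Real.sqrt (C ^ 2 + σ ^ 2) * e2norm (g2 - g1) + C * e2norm (h2 - h1) ≤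
      Real.sqrt (2 * C ^ 2 + σ ^ 2) *
            Real.sqrt (e2norm (g2 - g1) ^ 2 + e2norm (h2 - h1) ^ 2) := by
    rw [← Real.sqrt_mul (by positivity)]
    apply Real.le_sqrt_of_sq_le
    have s : Real.sqrt (C ^ 2 + σ ^ 2) ^ 2 = C ^ 2 + σ ^ 2 := Real.sq_sqrt (by positivity)
    have s' : 2 * C ^ 2 + σ ^ 2 = Real.sqrt (C ^ 2 + σ ^ 2) ^ 2 + C ^ 2 := by rw [s]; ring
    rw [s']
    nlinarith [sq_nonneg (Real.sqrt (C ^ 2 + σ ^ 2) * e2norm (h2 - h1) - C * e2norm (g2 - g1))]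
  rw [abs_le]
  constructor <;> linarith
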